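/- For every integer l > 1: (i) if φ ∈ M₄(l)* satisfies φ∘i = −φ, then PD(φ) ∈ S₄(l)_+, and PD(φ) = 0 if and only if φ vanishes identically on S₄(l)_−; (ii) every element of S₄(l)_+ is of the form PD(φ) for some φ ∈ M₄(l)* with φ∘i = −φ. Hence PD induces an isomorphism from the dual space of S₄(l)_− onto S₄(l)_+. -/

import Mathlib

open scoped BigOperators

namespace MW

variable (l : ℕ)

/-- Index type for the basis symbols: `0 ↦ x²`, `1 ↦ xy`, `2 ↦ y²`. -/
abbrev Sym := Fin 3 × ZMod l × ZMod l

/-- The free ℂ-vector space on the symbols. -/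
abbrev V := Sym l →₀ ℂ

/-- `gcd(u,v,l) = 1`. -/
def copr (u v : ZMod l) : Prop := Nat.gcd (Nat.gcd (ZMod.val u) (ZMod.val v)) l = 1

instance (u v : ZMod l) : Decidable (copr l u v) := by unfold copr; infer_instance

noncomputable def X2 (u v : ZMod l) : V l := Finsupp.single (0, u, v) 1
noncomputable def XY (u v : ZMod l) : V l := Finsupp.single (1, u, v) 1
noncomputable def Y2 (u v : ZMod l) : V l := Finsupp.single (2, u, v) 1

/-- The relation subspace: the relations of Merel–Shokurov on coprime symbols,
together with the (dummy) basis vectors at non-coprime indices. -/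
noncomputable def Rel : Submodule ℂ (V l) :=
  Submodule.span ℂ
    ({ w | ∃ u v, ¬ copr l u v ∧ (w = X2 l u v ∨ w = XY l u v ∨ w = Y2 l u v) } ∪
     { w | ∃ u v, copr l u v ∧
        (w = X2 l u v + Y2 l v (-u) ∨
         w = XY l u v - XY l v (-u) ∨
         w = Y2 l u v + X2 l v (-u) ∨
         w = XY l v (-u - v) - XY l (-u - v) u + Y2 l (-u - v) u + X2 l u v - XY l u v) })

/-- The space of weight four modular symbols of level `l`. -/
abbrev M := V l ⧸ Rel l

noncomputable def x2 (u v : ZMod l) : M l := Submodule.Quotient.mk (X2 l u v)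
noncomputable def xy (u v : ZMod l) : M l := Submodule.Quotient.mk (XY l u v)
noncomputable def y2 (u v : ZMod l) : M l := Submodule.Quotient.mk (Y2 l u v)

/-- The class of `p₂·x²(u,v) + p₁·xy(u,v) + p₀·y²(u,v)` in `M l`. -/
noncomputable def pcl (p2 p1 p0 : ℂ) (u v : ZMod l) : M l :=
  p2 • x2 l u v + p1 • xy l u v + p0 • y2 l u v

/-- Reduction `ZMod l → ZMod (gcd(a,l))`. -/
noncomputable def castg (a : ZMod l) : ZMod l →+* ZMod (Nat.gcd (ZMod.val a) l) :=
  ZMod.castHom (Nat.gcd_dvd_right (ZMod.val a) l) (ZMod (Nat.gcd (ZMod.val a) l))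

/-- The functional on `V l` attached to the cusp data `(a, b)`. -/
noncomputable def psiV (a : ZMod l) (b : ZMod (Nat.gcd (ZMod.val a) l)) : V l →ₗ[ℂ] ℂ :=
  Finsupp.lift ℂ ℂ (Sym l) fun p =>
    if copr l p.2.1 p.2.2 then
      (if p.1 = 0 then
        ((if p.2.1 = a ∧ castg l a p.2.2 = b then (1 : ℂ) else 0) +
         (if p.2.1 = -a ∧ castg l a p.2.2 = -b then (1 : ℂ) else 0))
       else if p.1 = 2 then
        (-(if p.2.2 = a ∧ castg l a p.2.1 = -b then (1 : ℂ) else 0) -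
          (if p.2.2 = -a ∧ castg l a p.2.1 = b then (1 : ℂ) else 0))
       else 0)
    else 0

/-- The cuspidal subspace `S₄(l) ⊆ M₄(l)`: the (image in `M l` of the) intersection
of the kernels of all the functionals `ψ_{(a,b)}`. -/
noncomputable def S : Submodule ℂ (M l) :=
  Submodule.map (Rel l).mkQ
    (⨅ (a : ZMod l), ⨅ (b : ZMod (Nat.gcd (ZMod.val a) l)), ⨅ (_ : IsUnit b),
      LinearMap.ker (psiV l a b))

/-- The linear map on `V l` underlying the involution `i`:
`x²(u,v) ↦ x²(-u,v)`, `xy(u,v) ↦ -xy(-u,v)`, `y²(u,v) ↦ y²(-u,v)`. -/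
noncomputable def iV : V l →ₗ[ℂ] V l :=
  Finsupp.lift (V l) ℂ (Sym l) fun p =>
    if p.1 = 1 then -(Finsupp.single (1, -p.2.1, p.2.2) (1 : ℂ))
    else Finsupp.single (p.1, -p.2.1, p.2.2) (1 : ℂ)

/-- The Poincaré duality map (as a function on the dual space). -/
noncomputable def PD [NeZero l] (φ : Module.Dual ℂ (M l)) : M l :=
  (24 : ℂ)⁻¹ • ∑ u : ZMod l, ∑ v : ZMod l,
    ( φ (pcl l 1 (-2) 1 (-v) (u + v) - pcl l 1 2 1 v (v - u)) • x2 l u v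
      - (2 : ℂ) • φ (pcl l 0 (-1) 1 (-v) (u + v) + pcl l 0 1 1 v (v - u)) • xy l u v
      + φ (pcl l 0 0 1 (-v) (u + v) - pcl l 0 0 1 v (v - u)) • y2 l u v )


section Aux

variable {l}

theorem V_ext {N : Type*} [AddCommGroup N] [Module ℂ N] {f g : V l →ₗ[ℂ] N}
    (h0 : ∀ u v, f (X2 l u v) = g (X2 l u v))
    (h1 : ∀ u v, f (XY l u v) = g (XY l u v))
    (h2 : ∀ u v, f (Y2 l u v) = g (Y2 l u v)) : f = g := by
  apply Finsupp.lhom_ext'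
  rintro ⟨j, u, v⟩
  apply LinearMap.ext_ring
  fin_cases j
  · exact h0 u v
  · exact h1 u v
  · exact h2 u v

/-- Linear map from values on the basis. -/
noncomputable def mkL {N : Type*} [AddCommGroup N] [Module ℂ N] (a b c : ZMod l → ZMod l → N) :
    V l →ₗ[ℂ] N :=
  Finsupp.lift N ℂ (Sym l) fun p =>
    if p.1 = 0 then a p.2.1 p.2.2 else if p.1 = 1 then b p.2.1 p.2.2 else c p.2.1 p.2.2

@[simp] theorem mkL_X2 {N : Type*} [AddCommGroup N] [Module ℂ N] (a b c : ZMod l → ZMod l → N)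
    (u v : ZMod l) : mkL a b c (X2 l u v) = a u v := by
  simp [mkL, X2]

@[simp] theorem mkL_XY {N : Type*} [AddCommGroup N] [Module ℂ N] (a b c : ZMod l → ZMod l → N)
    (u v : ZMod l) : mkL a b c (XY l u v) = b u v := by
  simp [mkL, XY]

@[simp] theorem mkL_Y2 {N : Type*} [AddCommGroup N] [Module ℂ N] (a b c : ZMod l → ZMod l → N)
    (u v : ZMod l) : mkL a b c (Y2 l u v) = c u v := by
  simp [mkL, Y2]

@[simp] theorem iV_X2 (u v : ZMod l) : iV l (X2 l u v) = X2 l (-u) v := by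
  simp [iV, X2]

@[simp] theorem iV_XY (u v : ZMod l) : iV l (XY l u v) = -XY l (-u) v := by
  simp [iV, XY]

@[simp] theorem iV_Y2 (u v : ZMod l) : iV l (Y2 l u v) = Y2 l (-u) v := by
  simp [iV, Y2]

variable (l) in
/-- The action of the element of order four. -/
noncomputable def sV : V l →ₗ[ℂ] V l :=
  mkL (fun u v => Y2 l v (-u)) (fun u v => -XY l v (-u)) (fun u v => X2 l v (-u))

variable (l) in
/-- The action of the element of order three. -/
noncomputable def rV : V l →ₗ[ℂ] V l :=
  mkL (fun u v => Y2 l v (-u - v)) (fun u v => Y2 l v (-u - v) - XY l v (-u - v))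
    (fun u v => X2 l v (-u - v) - (2 : ℂ) • XY l v (-u - v) + Y2 l v (-u - v))

variable (l) in
/-- The action of `-1`. -/
noncomputable def jV : V l →ₗ[ℂ] V l :=
  mkL (fun u v => X2 l (-u) (-v)) (fun u v => XY l (-u) (-v)) (fun u v => Y2 l (-u) (-v))

variable (l) in
/-- Projection to the coprime symbols. -/
noncomputable def cV : V l →ₗ[ℂ] V l :=
  mkL (fun u v => if copr l u v then X2 l u v else 0) (fun u v => if copr l u v then XY l u v else 0)
    (fun u v => if copr l u v then Y2 l u v else 0)

@[simp] theorem sV_X2 (u v : ZMod l) : sV l (X2 l u v) = Y2 l v (-u) := by simp [sV]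
@[simp] theorem sV_XY (u v : ZMod l) : sV l (XY l u v) = -XY l v (-u) := by simp [sV]
@[simp] theorem sV_Y2 (u v : ZMod l) : sV l (Y2 l u v) = X2 l v (-u) := by simp [sV]
@[simp] theorem rV_X2 (u v : ZMod l) : rV l (X2 l u v) = Y2 l v (-u - v) := by simp [rV]
@[simp] theorem rV_XY (u v : ZMod l) : rV l (XY l u v) = Y2 l v (-u - v) - XY l v (-u - v) := by
  simp [rV]
@[simp] theorem rV_Y2 (u v : ZMod l) : rV l (Y2 l u v) =
    X2 l v (-u - v) - (2 : ℂ) • XY l v (-u - v) + Y2 l v (-u - v) := by simp [rV]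
@[simp] theorem jV_X2 (u v : ZMod l) : jV l (X2 l u v) = X2 l (-u) (-v) := by simp [jV]
@[simp] theorem jV_XY (u v : ZMod l) : jV l (XY l u v) = XY l (-u) (-v) := by simp [jV]
@[simp] theorem jV_Y2 (u v : ZMod l) : jV l (Y2 l u v) = Y2 l (-u) (-v) := by simp [jV]
@[simp] theorem cV_X2 (u v : ZMod l) :
    cV l (X2 l u v) = if copr l u v then X2 l u v else 0 := by simp [cV]
@[simp] theorem cV_XY (u v : ZMod l) :
    cV l (XY l u v) = if copr l u v then XY l u v else 0 := by simp [cV]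
@[simp] theorem cV_Y2 (u v : ZMod l) :
    cV l (Y2 l u v) = if copr l u v then Y2 l u v else 0 := by simp [cV]

theorem copr_iff [NeZero l] (u v : ZMod l) :
    copr l u v ↔ ∃ a b : ZMod l, a * u + b * v = 1 := by
  have key : copr l u v ↔ ∃ x y z : ℤ, x * u.val + y * v.val + z * l = 1 := by
    unfold copr
    rw [← Nat.isCoprime_iff_coprime.trans (Nat.coprime_iff_gcd_eq_one)]
    constructor
    · rintro ⟨a, b, h⟩
      refine ⟨a * Nat.gcdA u.val v.val, a * Nat.gcdB u.val v.val, b, ?_⟩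
      rw [Nat.gcd_eq_gcd_ab] at h
      linear_combination h
    · rintro ⟨x, y, z, h⟩
      obtain ⟨c, hc⟩ : ((Nat.gcd u.val v.val : ℕ) : ℤ) ∣ u.val := by
        exact_mod_cast Nat.gcd_dvd_left _ _
      obtain ⟨d, hd⟩ : ((Nat.gcd u.val v.val : ℕ) : ℤ) ∣ v.val := by
        exact_mod_cast Nat.gcd_dvd_right _ _
      refine ⟨x * c + y * d, z, ?_⟩
      linear_combination h - x * hc - y * hd
  rw [key]
  constructor
  · rintro ⟨x, y, z, h⟩
    refine ⟨x, y, ?_⟩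
    have := congrArg (Int.cast : ℤ → ZMod l) h
    push_cast at this
    simpa using this
  · rintro ⟨a, b, h⟩
    have h2 : (((a.val : ℤ) * u.val + b.val * v.val - 1 : ℤ) : ZMod l) = 0 := by
      push_cast
      simp [h]
    rw [ZMod.intCast_zmod_eq_zero_iff_dvd] at h2
    obtain ⟨c, hc⟩ := h2
    exact ⟨a.val, b.val, -c, by linear_combination hc⟩

theorem copr_s [NeZero l] (u v : ZMod l) : copr l v (-u) ↔ copr l u v := by
  simp only [copr_iff]
  constructor
  · rintro ⟨a, b, h⟩
    exact ⟨-b, a, by linear_combination h⟩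
  · rintro ⟨a, b, h⟩
    exact ⟨b, -a, by linear_combination h⟩

theorem copr_r [NeZero l] (u v : ZMod l) : copr l v (-u - v) ↔ copr l u v := by
  simp only [copr_iff]
  constructor
  · rintro ⟨a, b, h⟩
    exact ⟨-b, a - b, by linear_combination h⟩
  · rintro ⟨a, b, h⟩
    exact ⟨b - a, -a, by linear_combination h⟩

theorem copr_j [NeZero l] (u v : ZMod l) : copr l (-u) (-v) ↔ copr l u v := by
  simp only [copr_iff]
  constructor
  · rintro ⟨a, b, h⟩
    exact ⟨-a, -b, by linear_combination h⟩
  · rintro ⟨a, b, h⟩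
    exact ⟨-a, -b, by linear_combination h⟩

theorem ss (w : V l) : sV l (sV l w) = jV l w := by
  suffices h : (sV l) ∘ₗ (sV l) = jV l from LinearMap.congr_fun h w
  apply V_ext <;> intro u v <;> simp

theorem jj (w : V l) : jV l (jV l w) = w := by
  suffices h : (jV l) ∘ₗ (jV l) = LinearMap.id from LinearMap.congr_fun h w
  apply V_ext <;> intro u v <;> simp

theorem ii (w : V l) : iV l (iV l w) = w := by
  suffices h : (iV l) ∘ₗ (iV l) = LinearMap.id from LinearMap.congr_fun h w
  apply V_ext <;> intro u v <;> simp

theorem js (w : V l) : jV l (sV l w) = sV l (jV l w) := by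
  rw [← ss, ← ss]

theorem jr (w : V l) : jV l (rV l w) = rV l (jV l w) := by
  suffices h : (jV l) ∘ₗ (rV l) = (rV l) ∘ₗ (jV l) from LinearMap.congr_fun h w
  apply V_ext <;> intro u v <;> simp <;> ring_nf

theorem rrr (w : V l) : rV l (rV l (rV l w)) = w := by
  suffices h : (rV l) ∘ₗ (rV l) ∘ₗ (rV l) = LinearMap.id from LinearMap.congr_fun h w
  have e1 : ∀ u v : ZMod l, -v - (-u - v) = u := fun u v => by ring
  apply V_ext <;> intro u v <;> simp [e1] <;> module

theorem cs [NeZero l] (w : V l) : cV l (sV l w) = sV l (cV l w) := by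
  suffices h : (cV l) ∘ₗ (sV l) = (sV l) ∘ₗ (cV l) from LinearMap.congr_fun h w
  apply V_ext <;> intro u v <;> by_cases hc : copr l u v <;> simp [copr_s, hc]

theorem cr [NeZero l] (w : V l) : cV l (rV l w) = rV l (cV l w) := by
  suffices h : (cV l) ∘ₗ (rV l) = (rV l) ∘ₗ (cV l) from LinearMap.congr_fun h w
  apply V_ext <;> intro u v <;> by_cases hc : copr l u v <;> simp [copr_r, hc]

theorem cj [NeZero l] (w : V l) : cV l (jV l w) = jV l (cV l w) := by
  rw [← ss, ← ss, cs, cs]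

theorem cc (w : V l) : cV l (cV l w) = cV l w := by
  suffices h : (cV l) ∘ₗ (cV l) = (cV l) from LinearMap.congr_fun h w
  apply V_ext <;> intro u v <;> by_cases hc : copr l u v <;> simp [hc]

/-- `i g₁ = g₂ i`. -/
theorem ig (w : V l) :
    iV l (jV l (rV l w)) = sV l (rV l (rV l (sV l (iV l w)))) := by
  suffices h : (iV l) ∘ₗ (jV l) ∘ₗ (rV l) = (sV l) ∘ₗ (rV l) ∘ₗ (rV l) ∘ₗ (sV l) ∘ₗ (iV l) from
    LinearMap.congr_fun h w
  have e1 : ∀ u v : ZMod l, -v - (u - v) = -u := fun u v => by ring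
  have e2 : ∀ u v : ZMod l, -(-u - v) = u + v := fun u v => by ring
  apply V_ext <;> intro u v <;> simp [e1, e2] <;> rw [add_comm v u] <;> module

/-! ### The relation space -/

theorem rel_c (w : V l) : w - cV l w ∈ Rel l := by
  have h : (Rel l).mkQ ∘ₗ (LinearMap.id - cV l) = 0 := by
    apply V_ext <;> intro u v <;> by_cases hc : copr l u v <;>
      simp [hc] <;> exact Submodule.subset_span (Or.inl ⟨u, v, hc, by simp⟩)
  have := LinearMap.congr_fun h w
  rw [← Submodule.Quotient.mk_eq_zero]
  simpa using this

theorem rel_s [NeZero l] (w : V l) : w + sV l w ∈ Rel l := by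
  suffices h : (Rel l).mkQ ∘ₗ (LinearMap.id + sV l) ∘ₗ cV l = 0 by
    have h1 : cV l w + sV l (cV l w) ∈ Rel l := by
      have := LinearMap.congr_fun h w
      simpa [← Submodule.Quotient.mk_add] using this
    have h2 := add_mem h1 (add_mem (rel_c w) (rel_c (sV l w)))
    rw [cs] at h2
    convert h2 using 1
    abel
  apply V_ext <;> intro u v <;> by_cases hc : copr l u v <;>
    simp [hc, ← Submodule.Quotient.mk_add, ← Submodule.Quotient.mk_neg] <;>
    exact Submodule.subset_span (Or.inr ⟨u, v, hc, by simp [sub_eq_add_neg]⟩)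

theorem r_gen (u v : ZMod l) (hc : copr l u v) :
    XY l v (-u - v) - XY l (-u - v) u + Y2 l (-u - v) u + X2 l u v - XY l u v ∈ Rel l :=
  Submodule.subset_span (Or.inr ⟨u, v, hc, by simp⟩)

theorem r_gen_eq (u v : ZMod l) :
    XY l v (-u - v) - XY l (-u - v) u + Y2 l (-u - v) u + X2 l u v - XY l u v =
    (X2 l u v - XY l u v) + rV l (X2 l u v - XY l u v) + rV l (rV l (X2 l u v - XY l u v)) := by
  have e1 : ∀ u v : ZMod l, -v - (-u - v) = u := fun u v => by ring
  simp [e1]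
  module

theorem rel_r [NeZero l] (w : V l) : w + rV l w + rV l (rV l w) ∈ Rel l := by
  set N : V l →ₗ[ℂ] V l := LinearMap.id + rV l + rV l ∘ₗ rV l with hN
  have hNa : ∀ w, N w = w + rV l w + rV l (rV l w) := fun w => by simp [hN]
  have hNr : ∀ w, N (rV l w) = N w := fun w => by rw [hNa, hNa, rrr]; abel
  have h0 : ∀ u v, copr l u v → N (X2 l u v - XY l u v) ∈ Rel l := by
    intro u v hc
    rw [hNa, ← r_gen_eq]
    exact r_gen u v hc
  have e1 : ∀ u v : ZMod l, -v - (-u - v) = u := fun u v => by ring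
  have hxy : ∀ u v, copr l u v → N (XY l u v) ∈ Rel l := by
    intro u v hc
    have hc' : copr l (-u - v) u := by
      have := copr_r v (-u - v)
      rw [show -v - (-u - v) = u by ring, copr_r] at this
      exact this.2 hc
    have := h0 _ _ hc'
    rw [← hNr] at this
    simpa [show -(-u-v) - u = v by ring] using this
  have hx : ∀ u v, copr l u v → N (X2 l u v) ∈ Rel l := by
    intro u v hc
    have := add_mem (h0 u v hc) (hxy u v hc)
    rw [← map_add] at this
    simpa using this
  have hy : ∀ u v, copr l u v → N (Y2 l u v) ∈ Rel l := by
    intro u v hc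
    have hc' : copr l (-u - v) u := by
      have := copr_r v (-u - v)
      rw [show -v - (-u - v) = u by ring, copr_r] at this
      exact this.2 hc
    have := hx _ _ hc'
    rw [← hNr] at this
    simpa [show -(-u-v) - u = v by ring] using this
  suffices h : (Rel l).mkQ ∘ₗ N ∘ₗ cV l = 0 by
    have h1 : N (cV l w) ∈ Rel l := by
      have := LinearMap.congr_fun h w
      simpa using this
    rw [hNa] at h1
    have h2 := add_mem h1 (add_mem (add_mem (rel_c w) (rel_c (rV l w))) (rel_c (rV l (rV l w))))
    rw [cr, cr] at h2
    convert h2 using 1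
    abel_nf
    simp [cr]
  apply V_ext <;> intro u v <;> by_cases hc : copr l u v <;> simp [hc, hxy, hx, hy]

/-- Criterion for a functional to descend to `M`. -/
theorem rel_le_ker (f : Module.Dual ℂ (V l)) (hs : ∀ w, f (sV l w) = -f w)
    (hr : ∀ w, f w + f (rV l w) + f (rV l (rV l w)) = 0) (hc : ∀ w, f (cV l w) = f w) :
    Rel l ≤ LinearMap.ker f := by
  unfold Rel
  rw [Submodule.span_le]
  rintro w (⟨u, v, h, h1⟩ | ⟨u, v, h, h1⟩)
  · simp only [SetLike.mem_coe, LinearMap.mem_ker]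
    rcases h1 with rfl | rfl | rfl <;> rw [← hc] <;> simp [h]
  · simp only [SetLike.mem_coe, LinearMap.mem_ker]
    rcases h1 with rfl | rfl | rfl | rfl
    · have := hs (X2 l u v)
      simp at this
      simp [this]
    · have := hs (XY l u v)
      simp at this
      simp [this]
    · have := hs (Y2 l u v)
      simp at this
      simp [this]
    · rw [r_gen_eq, map_add, map_add]
      exact hr _

/-- The functional on `V` attached to a functional on `M`. -/
noncomputable def pull (φ : Module.Dual ℂ (M l)) : Module.Dual ℂ (V l) := φ.comp (Rel l).mkQ

theorem pull_rel (φ : Module.Dual ℂ (M l)) {w : V l} (h : w ∈ Rel l) : pull φ w = 0 := by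
  have : (Rel l).mkQ w = 0 := by simpa using h
  simp only [pull, LinearMap.comp_apply, this, map_zero]

theorem pull_s [NeZero l] (φ : Module.Dual ℂ (M l)) (w : V l) : pull φ (sV l w) = -pull φ w := by
  have := pull_rel φ (rel_s w)
  rw [map_add] at this
  linear_combination this

theorem pull_j [NeZero l] (φ : Module.Dual ℂ (M l)) (w : V l) : pull φ (jV l w) = pull φ w := by
  rw [← ss, pull_s, pull_s, neg_neg]

theorem pull_r [NeZero l] (φ : Module.Dual ℂ (M l)) (w : V l) :
    pull φ w + pull φ (rV l w) + pull φ (rV l (rV l w)) = 0 := by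
  have := pull_rel φ (rel_r w)
  rwa [map_add, map_add] at this

theorem pull_c (φ : Module.Dual ℂ (M l)) (w : V l) : pull φ (cV l w) = pull φ w := by
  have := pull_rel φ (rel_c w)
  rw [map_sub] at this
  linear_combination -this

/-! ### The duality `Θ : V* → V` -/

/-- Summand of `Θ`. -/
noncomputable def thF (f : Module.Dual ℂ (V l)) (u v : ZMod l) : V l :=
  f (Y2 l u v) • X2 l u v - (2 * f (XY l u v)) • XY l u v + f (X2 l u v) • Y2 l u v

variable [NeZero l]

noncomputable def th (f : Module.Dual ℂ (V l)) : V l :=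
  ∑ p : ZMod l × ZMod l, thF f p.1 p.2

theorem th_add (f g : Module.Dual ℂ (V l)) : th (f + g) = th f + th g := by
  simp only [th, ← Finset.sum_add_distrib]
  refine Finset.sum_congr rfl fun p _ => ?_
  simp only [thF, LinearMap.add_apply]
  module

theorem th_smul (a : ℂ) (g : Module.Dual ℂ (V l)) : th (a • g) = a • th g := by
  simp only [th, Finset.smul_sum]
  refine Finset.sum_congr rfl fun p _ => ?_
  simp only [thF, LinearMap.smul_apply, smul_eq_mul]
  module

theorem th_neg (g : Module.Dual ℂ (V l)) : th (-g) = - th g := by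
  have := th_smul (-1) g
  simpa using this

theorem th_sub (f g : Module.Dual ℂ (V l)) : th (f - g) = th f - th g := by
  rw [sub_eq_add_neg, th_add, th_neg, sub_eq_add_neg]

theorem th_symm (f g : Module.Dual ℂ (V l)) : f (th g) = g (th f) := by
  simp only [th, map_sum]
  refine Finset.sum_congr rfl fun p _ => ?_
  simp only [thF, map_add, map_sub, map_smul, smul_eq_mul]
  ring

theorem th_surj (k : V l) : ∃ f, th f = k := by
  refine ⟨mkL (fun u v => k (2, u, v)) (fun u v => -k (1, u, v) / 2) (fun u v => k (0, u, v)), ?_⟩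
  ext ⟨j, a, b⟩
  simp only [th, thF, mkL_X2, mkL_XY, mkL_Y2, Finsupp.finsetSum_apply]
  rw [Finset.sum_eq_single (a, b)]
  · fin_cases j <;> simp [X2, XY, Y2]
    ring
  · rintro ⟨a', b'⟩ _ hne
    have : ¬ (a' = a ∧ b' = b) := by simpa using hne
    fin_cases j <;> simp [X2, XY, Y2, this]
  · simp

theorem th_inj {f g : Module.Dual ℂ (V l)} (h : th f = th g) : f = g := by
  apply LinearMap.ext
  intro k
  obtain ⟨f', rfl⟩ := th_surj k
  rw [th_symm, h, th_symm]

theorem th_s (f : Module.Dual ℂ (V l)) : sV l (th (f ∘ₗ sV l)) = th f := by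
  let e : ZMod l × ZMod l ≃ ZMod l × ZMod l :=
    ⟨fun p => (p.2, -p.1), fun p => (-p.2, p.1), fun p => by simp, fun p => by simp⟩
  simp only [th, map_sum]
  refine Fintype.sum_equiv e _ _ fun p => ?_
  simp only [thF, e, Equiv.coe_fn_mk, LinearMap.comp_apply, sV_X2, sV_XY, sV_Y2, map_add, map_sub,
    map_smul, map_neg]
  module

theorem th_r (f : Module.Dual ℂ (V l)) : rV l (th (f ∘ₗ rV l)) = th f := by
  let e : ZMod l × ZMod l ≃ ZMod l × ZMod l :=
    ⟨fun p => (p.2, -p.1 - p.2), fun p => (-p.1 - p.2, p.1), fun p => by ext <;> simp <;> ring,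
      fun p => by ext <;> simp⟩
  simp only [th, map_sum]
  refine Fintype.sum_equiv e _ _ fun p => ?_
  simp only [thF, e, Equiv.coe_fn_mk, LinearMap.comp_apply, rV_X2, rV_XY, rV_Y2, map_add, map_sub,
    map_smul, smul_eq_mul]
  module

theorem th_i (f : Module.Dual ℂ (V l)) : iV l (th (f ∘ₗ iV l)) = th f := by
  let e : ZMod l × ZMod l ≃ ZMod l × ZMod l :=
    ⟨fun p => (-p.1, p.2), fun p => (-p.1, p.2), fun p => by simp, fun p => by simp⟩
  simp only [th, map_sum]
  refine Fintype.sum_equiv e _ _ fun p => ?_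
  simp only [thF, e, Equiv.coe_fn_mk, LinearMap.comp_apply, iV_X2, iV_XY, iV_Y2, map_add, map_sub,
    map_smul, map_neg]
  module

theorem th_c (f : Module.Dual ℂ (V l)) : th (f ∘ₗ cV l) = cV l (th f) := by
  simp only [th, map_sum]
  refine Finset.sum_congr rfl fun p _ => ?_
  by_cases h : copr l p.1 p.2 <;> simp [thF, h]

/-- Formula for `PD` in terms of `Θ`. -/
theorem PD_eq (φ : Module.Dual ℂ (M l)) :
    PD l φ = (24 : ℂ)⁻¹ • (Rel l).mkQ (th (pull φ ∘ₗ jV l ∘ₗ rV l) -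
      th (pull φ ∘ₗ sV l ∘ₗ rV l ∘ₗ rV l ∘ₗ sV l)) := by
  unfold PD
  congr 1
  rw [← Fintype.sum_prod_type' (f := fun u v =>
    ( φ (pcl l 1 (-2) 1 (-v) (u + v) - pcl l 1 2 1 v (v - u)) • x2 l u v
      - (2 : ℂ) • φ (pcl l 0 (-1) 1 (-v) (u + v) + pcl l 0 1 1 v (v - u)) • xy l u v
      + φ (pcl l 0 0 1 (-v) (u + v) - pcl l 0 0 1 v (v - u)) • y2 l u v ))]
  simp only [th, ← Finset.sum_sub_distrib, map_sum]
  refine Finset.sum_congr rfl fun p _ => ?_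
  obtain ⟨u, v⟩ := p
  have hx : ∀ u v, pull φ (X2 l u v) = φ (x2 l u v) := fun _ _ => rfl
  have hxy : ∀ u v, pull φ (XY l u v) = φ (xy l u v) := fun _ _ => rfl
  have hy : ∀ u v, pull φ (Y2 l u v) = φ (y2 l u v) := fun _ _ => rfl
  have kx : ∀ u v, (Rel l).mkQ (X2 l u v) = x2 l u v := fun _ _ => rfl
  have kxy : ∀ u v, (Rel l).mkQ (XY l u v) = xy l u v := fun _ _ => rfl
  have ky : ∀ u v, (Rel l).mkQ (Y2 l u v) = y2 l u v := fun _ _ => rfl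
  have e1 : -(-u - v) = u + v := by ring
  have e2 : -v - -u = u - v := by ring
  have e4 : -(u - v) = v - u := by ring
  have e5 : u - (u - v) = v := by ring
  simp only [thF, LinearMap.comp_apply, rV_X2, rV_XY, rV_Y2, jV_X2, jV_XY, jV_Y2,
    sV_X2, sV_XY, sV_Y2, map_add, map_sub, map_smul, map_neg, hx, hxy, hy, kx, kxy, ky, pcl,
    e1, e2, sub_neg_eq_add, e4, e5, neg_neg, smul_eq_mul]
  module

/-! ### The functionals `ψ` -/

theorem psi_X2 (a : ZMod l) (b : ZMod (Nat.gcd (ZMod.val a) l)) (u v : ZMod l) :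
    psiV l a b (X2 l u v) = if copr l u v then
      ((if u = a ∧ castg l a v = b then (1 : ℂ) else 0) +
         (if u = -a ∧ castg l a v = -b then (1 : ℂ) else 0)) else 0 := by
  simp [psiV, X2]

theorem psi_XY (a : ZMod l) (b : ZMod (Nat.gcd (ZMod.val a) l)) (u v : ZMod l) :
    psiV l a b (XY l u v) = 0 := by
  simp [psiV, XY]

theorem psi_Y2 (a : ZMod l) (b : ZMod (Nat.gcd (ZMod.val a) l)) (u v : ZMod l) :
    psiV l a b (Y2 l u v) = if copr l u v then
      (-(if v = a ∧ castg l a u = -b then (1 : ℂ) else 0) -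
          (if v = -a ∧ castg l a u = b then (1 : ℂ) else 0)) else 0 := by
  simp [psiV, Y2]

theorem castg_self (a : ZMod l) : castg l a a = 0 := by
  have h : castg l a ((a.val : ℕ) : ZMod l) = 0 := by
    rw [map_natCast, ZMod.natCast_eq_zero_iff]
    exact Nat.gcd_dvd_left _ _
  rwa [ZMod.natCast_zmod_val] at h

/-- The boundary functional: `ψ = g ∘ (s - 1)`. -/
noncomputable def gV (a : ZMod l) (b : ZMod (Nat.gcd (ZMod.val a) l)) : Module.Dual ℂ (V l) :=
  mkL (fun _ _ => 0) (fun _ _ => 0) (fun u v => psiV l a b (X2 l (-v) u))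

theorem copr_s' (u v : ZMod l) : copr l (-v) u ↔ copr l u v := by
  rw [← copr_s (-v) u, neg_neg]

theorem psi_eq (a : ZMod l) (b : ZMod (Nat.gcd (ZMod.val a) l)) (w : V l) :
    psiV l a b w = gV a b (sV l w) - gV a b w := by
  suffices h : psiV l a b = gV a b ∘ₗ sV l - gV a b from LinearMap.congr_fun h w
  apply V_ext <;> intro u v
  · simp [gV]
  · simp [gV, psi_XY]
  · simp only [gV, LinearMap.sub_apply, LinearMap.comp_apply, sV_Y2, mkL_X2, mkL_Y2, psi_X2, psi_Y2,
      copr_s', neg_eq_iff_eq_neg, neg_neg]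
    split_ifs <;> norm_num

theorem gV_j (a : ZMod l) (b : ZMod (Nat.gcd (ZMod.val a) l)) (w : V l) :
    gV a b (jV l w) = gV a b w := by
  suffices h : gV a b ∘ₗ jV l = gV a b from LinearMap.congr_fun h w
  apply V_ext <;> intro u v
  · simp [gV]
  · simp [gV]
  · simp only [gV, LinearMap.comp_apply, jV_Y2, mkL_Y2, psi_X2,
      copr_s', neg_eq_iff_eq_neg, map_neg, neg_neg]
    congr 1
    exact add_comm _ _

theorem gV_t (a : ZMod l) (b : ZMod (Nat.gcd (ZMod.val a) l)) (w : V l) :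
    gV a b (sV l (rV l w)) = gV a b w := by
  suffices h : gV a b ∘ₗ sV l ∘ₗ rV l = gV a b from LinearMap.congr_fun h w
  apply V_ext <;> intro u v
  · simp [gV]
  · simp [gV]
  · have h0 : gV a b (sV l (rV l (Y2 l u v))) = psiV l a b (X2 l v (-u - v)) := by
      simp only [gV, rV_Y2, sV_X2, sV_XY, sV_Y2, map_add, map_sub, map_smul, map_neg,
        mkL_Y2, mkL_XY, mkL_X2, neg_neg]
      simp
    rw [LinearMap.comp_apply, LinearMap.comp_apply, h0]
    simp only [gV, mkL_Y2, psi_X2, copr_s', copr_r, neg_eq_iff_eq_neg, neg_neg]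
    have h1 : (v = a ∧ castg l a (-u - v) = b) ↔ (v = a ∧ castg l a u = -b) := by
      refine and_congr_right ?_
      rintro rfl
      rw [map_sub, map_neg, castg_self, sub_zero, neg_eq_iff_eq_neg]
    have h2 : (v = -a ∧ castg l a (-u - v) = -b) ↔ (v = -a ∧ castg l a u = b) := by
      refine and_congr_right ?_
      rintro rfl
      rw [map_sub, map_neg, map_neg, castg_self, neg_zero, sub_zero, neg_inj]
    simp only [h1, h2]
    congr 1
    exact add_comm _ _

theorem psi_c (a : ZMod l) (b : ZMod (Nat.gcd (ZMod.val a) l)) (w : V l) :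
    psiV l a b (cV l w) = psiV l a b w := by
  suffices h : psiV l a b ∘ₗ cV l = psiV l a b from LinearMap.congr_fun h w
  apply V_ext <;> intro u v <;> by_cases hc : copr l u v <;> simp [hc, psi_X2, psi_XY, psi_Y2]

/-! ### The element `k = Θ(φ)` -/

theorem s_cancel (x : V l) : jV l (sV l (sV l x)) = x := by rw [ss, jj]

theorem k_s (φ : Module.Dual ℂ (M l)) : sV l (th (pull φ)) = -th (pull φ) := by
  have h := th_s (pull φ)
  have h2 : pull φ ∘ₗ sV l = -pull φ := LinearMap.ext fun w => by simpa using pull_s φ w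
  rw [h2, th_neg, map_neg] at h
  rw [← h, neg_neg, h]

theorem th_r' (f : Module.Dual ℂ (V l)) : th (f ∘ₗ rV l) = rV l (rV l (th f)) := by
  rw [← th_r f, rrr]

theorem th_s' (f : Module.Dual ℂ (V l)) : th (f ∘ₗ sV l) = jV l (sV l (th f)) := by
  rw [← th_s f, s_cancel]

theorem th_i' (f : Module.Dual ℂ (V l)) : th (f ∘ₗ iV l) = iV l (th f) := by
  rw [← th_i f, ii]

theorem th_rr (f : Module.Dual ℂ (V l)) : th (f ∘ₗ rV l ∘ₗ rV l) = rV l (th f) := by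
  rw [← LinearMap.comp_assoc, th_r', th_r', rrr]

theorem k_r (φ : Module.Dual ℂ (M l)) :
    th (pull φ) + rV l (th (pull φ)) + rV l (rV l (th (pull φ))) = 0 := by
  rw [← th_r', ← th_rr, ← th_add, ← th_add]
  have : pull φ + pull φ ∘ₗ rV l ∘ₗ rV l + pull φ ∘ₗ rV l = 0 := LinearMap.ext fun w => by
    have := pull_r φ w
    simp only [LinearMap.add_apply, LinearMap.comp_apply, LinearMap.zero_apply]
    linear_combination this
  rw [this]
  simpa using th_smul 0 (0 : Module.Dual ℂ (V l))

theorem PD_rep (φ : Module.Dual ℂ (M l)) :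
    PD l φ = (Rel l).mkQ ((24 : ℂ)⁻¹ • (rV l (rV l (th (pull φ))) +
      jV l (sV l (rV l (th (pull φ)))))) := by
  rw [PD_eq, map_smul]
  congr 2
  have h1 : pull φ ∘ₗ jV l ∘ₗ rV l = pull φ ∘ₗ rV l := LinearMap.ext fun w => by simp [pull_j]
  have h2 : pull φ ∘ₗ sV l ∘ₗ rV l ∘ₗ rV l ∘ₗ sV l = -((pull φ ∘ₗ rV l ∘ₗ rV l) ∘ₗ sV l) :=
    LinearMap.ext fun w => by simp [pull_s]
  rw [h1, h2, th_neg, th_r', th_s', th_rr, sub_neg_eq_add]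

theorem mk_s (w : V l) : (Rel l).mkQ (sV l w) = -(Rel l).mkQ w := by
  have h : (Rel l).mkQ (w + sV l w) = 0 :=
    (Submodule.Quotient.mk_eq_zero _).2 (rel_s w)
  rw [map_add] at h
  exact eq_neg_of_add_eq_zero_right h

theorem mk_j (w : V l) : (Rel l).mkQ (jV l w) = (Rel l).mkQ w := by
  rw [← ss, mk_s, mk_s, neg_neg]

theorem mk_c (w : V l) : (Rel l).mkQ (cV l w) = (Rel l).mkQ w := by
  have h : (Rel l).mkQ (w - cV l w) = 0 :=
    (Submodule.Quotient.mk_eq_zero _).2 (rel_c w)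
  rw [map_sub] at h
  exact (sub_eq_zero.1 h).symm

theorem mk_r (w : V l) :
    (Rel l).mkQ w + (Rel l).mkQ (rV l w) + (Rel l).mkQ (rV l (rV l w)) = 0 := by
  have h : (Rel l).mkQ (w + rV l w + rV l (rV l w)) = 0 :=
    (Submodule.Quotient.mk_eq_zero _).2 (rel_r w)
  rwa [map_add, map_add] at h

theorem PD_rep' (φ : Module.Dual ℂ (M l)) :
    PD l φ = (24 : ℂ)⁻¹ • ((Rel l).mkQ (rV l (rV l (th (pull φ)))) -
      (Rel l).mkQ (rV l (th (pull φ)))) := by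
  rw [PD_rep, map_smul, map_add, mk_j, mk_s, sub_eq_add_neg]

theorem PD_mem (φ : Module.Dual ℂ (M l)) : PD l φ ∈ S l := by
  rw [PD_rep]
  refine Submodule.mem_map_of_mem ?_
  simp only [Submodule.mem_iInf, LinearMap.mem_ker]
  intro a b _
  set k := th (pull φ) with hk
  have e1 := gV_t a b (rV l k)
  have e2 := gV_t a b (rV l (rV l k))
  have e3 := gV_t a b k
  have e4 := congrArg (gV a b) (k_r φ)
  have e5 := congrArg (gV a b) (k_s φ)
  rw [← hk] at e4 e5
  rw [rrr] at e2
  rw [map_smul, map_add, psi_eq, psi_eq, gV_j, ← js, s_cancel]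
  simp only [map_add, map_neg, map_zero] at e4 e5
  rw [smul_eq_mul]
  linear_combination (24 : ℂ)⁻¹ * (e1 - e3 + 2 * e4 - 3 * (e5 - e2))

theorem PD_antisymm (φ φ' : Module.Dual ℂ (M l)) : φ' (PD l φ) = -φ (PD l φ') := by
  have h : ∀ φ (w : V l), φ ((Rel l).mkQ w) = pull φ w := fun _ _ => rfl
  rw [PD_rep', PD_rep', map_smul, map_smul, map_sub, map_sub, h, h, h, h, ← th_r' (pull φ),
    ← th_rr (pull φ), th_symm, th_symm (pull φ'), LinearMap.comp_apply, LinearMap.comp_apply,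
    LinearMap.comp_apply, smul_eq_mul, smul_eq_mul]
  ring

theorem PD_i (hi : Rel l ≤ (Rel l).comap (iV l)) (φ : Module.Dual ℂ (M l)) :
    PD l (φ.comp (Submodule.mapQ (Rel l) (Rel l) (iV l) hi)) =
      -Submodule.mapQ (Rel l) (Rel l) (iV l) hi (PD l φ) := by
  have h0 : pull (φ.comp (Submodule.mapQ (Rel l) (Rel l) (iV l) hi)) = pull φ ∘ₗ iV l := by
    apply LinearMap.ext
    intro w
    simp [pull]
  have h1 : (pull φ ∘ₗ iV l) ∘ₗ jV l ∘ₗ rV l =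
      (pull φ ∘ₗ sV l ∘ₗ rV l ∘ₗ rV l ∘ₗ sV l) ∘ₗ iV l :=
    LinearMap.ext fun w => by simp [ig]
  have h2 : (pull φ ∘ₗ iV l) ∘ₗ sV l ∘ₗ rV l ∘ₗ rV l ∘ₗ sV l =
      (pull φ ∘ₗ jV l ∘ₗ rV l) ∘ₗ iV l :=
    LinearMap.ext fun w => by
      have := ig (iV l w)
      rw [ii] at this
      simp [← this, ii]
  rw [PD_eq, PD_eq, h0, h1, h2, th_i', th_i', map_smul, ← map_sub, Submodule.mkQ_apply,
    Submodule.mkQ_apply, Submodule.mapQ_apply, ← smul_neg, ← Submodule.Quotient.mk_neg, ← map_neg,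
    neg_sub]

/-! ### Surjectivity -/

variable (l) in
/-- Projection to symmetric vectors supported on coprime symbols. -/
noncomputable def pV : V l →ₗ[ℂ] V l := (2 : ℂ)⁻¹ • (cV l ∘ₗ (LinearMap.id + jV l))

theorem pV_apply (w : V l) : pV l w = (2 : ℂ)⁻¹ • (cV l w + cV l (jV l w)) := by
  simp [pV]

theorem ps (w : V l) : pV l (sV l w) = sV l (pV l w) := by
  simp only [pV_apply, cs, js, map_smul, map_add]

theorem pr (w : V l) : pV l (rV l w) = rV l (pV l w) := by
  simp only [pV_apply, cr, jr, map_smul, map_add]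

theorem jp (w : V l) : jV l (pV l w) = pV l w := by
  simp only [pV_apply, map_smul, map_add, ← cj, jj]
  rw [add_comm]

theorem pj (w : V l) : pV l (jV l w) = pV l w := by
  simp only [pV_apply, jj]
  rw [add_comm]

theorem cp (w : V l) : cV l (pV l w) = pV l w := by
  simp only [pV_apply, map_smul, map_add, cc]

theorem pp (w : V l) : pV l (pV l w) = pV l w := by
  conv_lhs => rw [pV_apply]
  rw [jp, cp]
  module

theorem mk_p (w : V l) : (Rel l).mkQ (pV l w) = (Rel l).mkQ w := by
  rw [pV_apply, map_smul, map_add, mk_c, mk_c, mk_j]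
  module

/-- If `w` is killed by all `ψ`, its boundary `(s - 1) p w` lies in the range of `t - 1`. -/
theorem boundary (w : V l)
    (hw : ∀ (a : ZMod l) (b : ZMod (Nat.gcd (ZMod.val a) l)), IsUnit b → psiV l a b w = 0) :
    ∃ z, sV l (rV l z) - z = sV l (pV l w) - pV l w := by
  by_contra hcon
  have hmem : sV l (pV l w) - pV l w ∉ LinearMap.range (sV l ∘ₗ rV l - LinearMap.id) := by
    rintro ⟨z, hz⟩
    exact hcon ⟨z, by simpa using hz⟩
  obtain ⟨g0, hg0, hker⟩ := Submodule.exists_le_ker_of_notMem hmem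
  have hgT : ∀ z, g0 (sV l (rV l z)) = g0 z := by
    intro z
    have : g0 ((sV l ∘ₗ rV l - LinearMap.id : V l →ₗ[ℂ] V l) z) = 0 := hker ⟨z, rfl⟩
    simpa [sub_eq_zero] using this
  set g : Module.Dual ℂ (V l) := g0 ∘ₗ pV l with hg
  have gt : ∀ z, g (sV l (rV l z)) = g z := fun z => by
    simp only [hg, LinearMap.comp_apply, ps, pr, hgT]
  have gj : ∀ z, g (jV l z) = g z := fun z => by
    simp only [hg, LinearMap.comp_apply, pj]
  have gc : ∀ z, g (cV l z) = g z := fun z => by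
    simp only [hg, LinearMap.comp_apply, pV_apply, ← cj, cc]
  have gw : g (sV l w) - g w ≠ 0 := by
    simpa [hg, ps] using hg0
  have hl0 : (l : ℂ) ≠ 0 := Nat.cast_ne_zero.2 (NeZero.ne l)
  have e1 : ∀ u v : ZMod l, -(-u - v) = u + v := fun u v => by ring
  have jx : ∀ u v, g (X2 l (-u) (-v)) = g (X2 l u v) := fun u v => by simpa using gj (X2 l u v)
  have jxy : ∀ u v, g (XY l (-u) (-v)) = g (XY l u v) := fun u v => by simpa using gj (XY l u v)
  have jy : ∀ u v, g (Y2 l (-u) (-v)) = g (Y2 l u v) := fun u v => by simpa using gj (Y2 l u v)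
  -- the `x²` components vanish
  have tx : ∀ u v, g (X2 l (u + v) v) = g (X2 l u v) := fun u v => by
    have := gt (X2 l u v)
    rw [rV_X2, sV_Y2, ← jx, e1, neg_neg] at this
    exact this
  have txy : ∀ u v, g (XY l (u + v) v) + g (X2 l (u + v) v) = g (XY l u v) := fun u v => by
    have := gt (XY l u v)
    rw [rV_XY, map_sub, sV_Y2, sV_XY, map_sub, map_neg, ← jx, ← jxy, e1, neg_neg] at this
    linear_combination this
  have ty : ∀ u v, g (Y2 l (u + v) v) + 2 * g (XY l (u + v) v) + g (X2 l (u + v) v) =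
      g (Y2 l u v) := fun u v => by
    have := gt (Y2 l u v)
    rw [rV_Y2, map_add, map_sub, map_smul, sV_X2, sV_Y2, sV_XY, map_add, map_sub, map_smul,
      map_neg, ← jx, ← jxy, ← jy, e1, neg_neg, smul_eq_mul] at this
    linear_combination this
  have tx' : ∀ (n : ℕ) u v, g (X2 l (u + n * v) v) = g (X2 l u v) := by
    intro n u v
    induction n with
    | zero => simp
    | succ n ih =>
      rw [show u + ((n + 1 : ℕ) : ZMod l) * v = (u + n * v) + v by push_cast; ring, tx, ih]
  have txy' : ∀ (n : ℕ) u v, g (XY l (u + n * v) v) + n * g (X2 l u v) = g (XY l u v) := by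
    intro n u v
    induction n with
    | zero => simp
    | succ n ih =>
      have h1 := txy (u + n * v) v
      rw [tx, tx'] at h1
      rw [show u + ((n + 1 : ℕ) : ZMod l) * v = (u + n * v) + v by push_cast; ring]
      push_cast
      linear_combination h1 + ih
  have x0 : ∀ u v, g (X2 l u v) = 0 := fun u v => by
    have := txy' l u v
    simpa [hl0] using this
  have ty' : ∀ (n : ℕ) u v, g (Y2 l (u + n * v) v) + 2 * n * g (XY l u v) = g (Y2 l u v) := by
    intro n u v
    induction n with
    | zero => simp
    | succ n ih =>
      have h1 := ty (u + n * v) v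
      have h2 := txy' n u v
      have h3 := txy (u + n * v) v
      rw [x0] at h1 h2 h3
      rw [show u + ((n + 1 : ℕ) : ZMod l) * v = (u + n * v) + v by push_cast; ring]
      push_cast
      linear_combination h1 + ih - 2 * h2 - 2 * h3
  have xy0 : ∀ u v, g (XY l u v) = 0 := fun u v => by
    have := ty' l u v
    simpa [hl0] using this
  have yper : ∀ (n : ℕ) u v, g (Y2 l (u + n * v) v) = g (Y2 l u v) := fun n u v => by
    simpa [xy0] using ty' n u v
  have yper' : ∀ (n u v : ZMod l), g (Y2 l (u + n * v) v) = g (Y2 l u v) := fun n u v => by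
    simpa using yper n.val u v
  have ynon : ∀ u v, ¬ copr l u v → g (Y2 l u v) = 0 := fun u v h => by
    rw [← gc]
    simp [h]
  -- expand in the `ψ`
  let h : ∀ a : ZMod l, ZMod (Nat.gcd (ZMod.val a) l) → ℂ := fun a b =>
    g (Y2 l ((b.val : ℕ) : ZMod l) (-a))
  have hcast : ∀ u v : ZMod l, h u (castg l u v) = g (Y2 l v (-u)) := by
    intro u v
    have hne : NeZero (Nat.gcd (ZMod.val u) l) :=
      ⟨Nat.gcd_ne_zero_right (NeZero.ne l)⟩
    obtain ⟨n, hn⟩ : ∃ n : ZMod l, (((castg l u v).val : ℕ) : ZMod l) = v + n * (-u) := by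
      have h1 : ((((castg l u v).val : ℤ) - (v.val : ℤ) : ℤ) : ZMod (Nat.gcd (ZMod.val u) l)) = 0 := by
        push_cast
        rw [ZMod.natCast_zmod_val, ← map_natCast (castg l u), ZMod.natCast_zmod_val, sub_self]
      rw [ZMod.intCast_zmod_eq_zero_iff_dvd] at h1
      obtain ⟨q, hq⟩ := h1
      rw [Nat.gcd_eq_gcd_ab] at hq
      have h2 := congrArg (Int.cast : ℤ → ZMod l) hq
      push_cast at h2
      simp only [ZMod.natCast_zmod_val, ZMod.natCast_self] at h2
      refine ⟨-((Nat.gcdA u.val l : ZMod l) * q), ?_⟩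
      linear_combination h2
    show g (Y2 l _ _) = _
    rw [hn, yper']
  have hunit : ∀ u v : ZMod l, copr l u v → IsUnit (castg l u v) := by
    intro u v hc
    rw [copr_iff] at hc
    obtain ⟨a, b, hab⟩ := hc
    have := congrArg (castg l u) hab
    rw [map_add, map_mul, map_mul, castg_self, mul_zero, zero_add, map_one] at this
    exact IsUnit.of_mul_eq_one_right _ this
  have hfin : ∀ a : ZMod l, NeZero (Nat.gcd (ZMod.val a) l) := fun a =>
    ⟨Nat.gcd_ne_zero_right (NeZero.ne l)⟩
  classical
  have key : (2 : ℂ) • (g ∘ₗ sV l - g) = ∑ a : ZMod l, ∑ b : ZMod (Nat.gcd (ZMod.val a) l),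
      (if IsUnit b then h a b else 0) • psiV l a b := by
    have sum1 : ∀ u v : ZMod l, copr l u v →
        (∑ a : ZMod l, ∑ b : ZMod (Nat.gcd (ZMod.val a) l),
          (if IsUnit b then h a b else 0) * (if u = a ∧ castg l a v = b then (1 : ℂ) else 0)) =
        g (Y2 l v (-u)) := by
      intro u v hc
      rw [Finset.sum_eq_single u]
      · rw [Finset.sum_eq_single (castg l u v)]
        · simp [hunit u v hc, hcast]
        · intro b _ hb
          simp [hb.symm]
        · simp
      · intro a _ ha
        simp [ha.symm]
      · simp
    have sum2 : ∀ u v : ZMod l, copr l u v →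
        (∑ a : ZMod l, ∑ b : ZMod (Nat.gcd (ZMod.val a) l),
          (if IsUnit b then h a b else 0) * (if u = -a ∧ castg l a v = -b then (1 : ℂ) else 0)) =
        g (Y2 l v (-u)) := by
      intro u v hc
      have := sum1 (-u) (-v) ((copr_j u v).2 hc)
      rw [jy] at this
      rw [← this]
      refine Finset.sum_congr rfl fun a _ => Finset.sum_congr rfl fun b _ => ?_
      simp only [map_neg, neg_eq_iff_eq_neg]
    apply V_ext <;> intro u v
    · simp only [LinearMap.smul_apply, LinearMap.sub_apply, LinearMap.comp_apply, sV_X2, x0,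
        LinearMap.sum_apply, psi_X2, smul_eq_mul, sub_zero]
      by_cases hc : copr l u v
      · simp only [hc, if_true, mul_add, Finset.sum_add_distrib]
        rw [sum1 u v hc, sum2 u v hc]
        ring
      · simp only [hc, if_false, mul_zero, Finset.sum_const_zero]
        rw [ynon _ _ (by rwa [copr_s]), mul_zero]
    · simp only [LinearMap.smul_apply, LinearMap.sub_apply, LinearMap.comp_apply, sV_XY, xy0,
        LinearMap.sum_apply, psi_XY, smul_eq_mul, sub_zero, map_neg, neg_zero, mul_zero,
        Finset.sum_const_zero]
    · simp only [LinearMap.smul_apply, LinearMap.sub_apply, LinearMap.comp_apply, sV_Y2, x0,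
        LinearMap.sum_apply, psi_Y2, smul_eq_mul, zero_sub]
      by_cases hc : copr l u v
      · have hc' : copr l v (-u) := (copr_s u v).2 hc
        have s1 := sum1 v (-u) hc'
        have s2 := sum2 v (-u) hc'
        rw [jy] at s1 s2
        simp only [map_neg, neg_eq_iff_eq_neg, neg_neg] at s1 s2
        simp only [hc, if_true, mul_sub, mul_neg, Finset.sum_sub_distrib, Finset.sum_neg_distrib]
        rw [s1, s2]
        ring
      · simp only [hc, if_false, mul_zero, Finset.sum_const_zero]
        rw [ynon _ _ hc, neg_zero, mul_zero]
  have := LinearMap.congr_fun key w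
  simp only [LinearMap.smul_apply, LinearMap.sub_apply, LinearMap.comp_apply,
    LinearMap.sum_apply, smul_eq_mul] at this
  apply gw
  have hz : (∑ a : ZMod l, ∑ b : ZMod (Nat.gcd (ZMod.val a) l),
      (if IsUnit b then h a b else 0) * psiV l a b w) = 0 := by
    refine Finset.sum_eq_zero fun a _ => Finset.sum_eq_zero fun b _ => ?_
    split_ifs with hb
    · rw [hw a b hb, mul_zero]
    · rw [zero_mul]
  rw [hz] at this
  simpa using this

/-- Every suitable `k` comes from a functional on `M`. -/
theorem exists_pull (k : V l) (hs : sV l k = -k) (hr : k + rV l k + rV l (rV l k) = 0)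
    (hc : cV l k = k) : ∃ φ : Module.Dual ℂ (M l), th (pull φ) = k := by
  obtain ⟨f, rfl⟩ := th_surj k
  have h1 : f ∘ₗ sV l = -f := th_inj (by rw [th_neg, th_s', hs, map_neg, ← ss, hs, map_neg, hs, neg_neg])
  have h2 : f + f ∘ₗ rV l + f ∘ₗ rV l ∘ₗ rV l = 0 := by
    apply th_inj
    rw [th_add, th_add, th_r', th_rr]
    have h0 : th (0 : Module.Dual ℂ (V l)) = 0 := by
      simpa using th_smul 0 (0 : Module.Dual ℂ (V l))
    rw [h0, ← hr]
    abel
  have h3 : f ∘ₗ cV l = f := th_inj (by rw [th_c, hc])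
  have hk : Rel l ≤ LinearMap.ker f := rel_le_ker f
    (fun w => by simpa using LinearMap.congr_fun h1 w)
    (fun w => by simpa using LinearMap.congr_fun h2 w)
    (fun w => by simpa using LinearMap.congr_fun h3 w)
  refine ⟨(Rel l).liftQ f hk, ?_⟩
  congr 1

theorem PD_surj (m : M l) (hm : m ∈ S l) : ∃ φ, PD l φ = m := by
  obtain ⟨w, hw, rfl⟩ := hm
  simp only [SetLike.mem_coe, Submodule.mem_iInf, LinearMap.mem_ker] at hw
  obtain ⟨z0, hz0⟩ := boundary w hw
  have hz : sV l (rV l (pV l z0)) - pV l z0 = sV l (pV l w) - pV l w := by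
    have := congrArg (pV l) hz0
    simpa only [map_sub, ps, pr, pp] using this
  have hw' := mk_p w
  have jz := jp z0
  have jw := jp w
  have cz := cp z0
  set z := pV l z0
  set x := pV l w
  have hss : ∀ y, jV l y = y → sV l (sV l y) = y := fun y hy => by rw [ss, hy]
  -- `k = (1 - r) z`
  have hk0 : (z - x) - sV l (z - x) = -sV l (z - rV l z) := by
    simp only [map_sub]
    have : sV l x = sV l (rV l z) - z + x := by rw [hz]; abel
    rw [this]
    abel
  have hs : sV l (z - rV l z) = -(z - rV l z) := by
    have h1 : sV l ((z - x) - sV l (z - x)) = -((z - x) - sV l (z - x)) := by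
      rw [map_sub, hss (z - x) (by rw [map_sub, jz, jw])]
      abel
    rw [hk0, map_neg, hss _ (by rw [map_sub, jr, jz]), neg_neg] at h1
    exact h1.symm
  have hr : (z - rV l z) + rV l (z - rV l z) + rV l (rV l (z - rV l z)) = 0 := by
    simp only [map_sub, rrr]
    abel
  have hc : cV l (z - rV l z) = z - rV l z := by rw [map_sub, cr, cz]
  obtain ⟨φ, hφ⟩ := exists_pull _ hs hr hc
  refine ⟨(-4 : ℂ) • φ, ?_⟩
  have hpull : pull ((-4 : ℂ) • φ) = (-4 : ℂ) • pull φ := rfl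
  rw [PD_rep', hpull, th_smul, hφ]
  simp only [map_smul, map_sub, rrr]
  rw [← hw']
  have m1 := mk_r z
  have m2 := congrArg (Rel l).mkQ hz
  rw [map_sub, map_sub, mk_s, mk_s] at m2
  have m3 : (Rel l).mkQ (rV l (rV l z)) = -(Rel l).mkQ z - (Rel l).mkQ (rV l z) := by
    rw [← sub_eq_zero, ← m1]
    abel
  have m4 : (Rel l).mkQ (rV l z) = (2 : ℂ) • (Rel l).mkQ x - (Rel l).mkQ z := by
    rw [sub_eq_iff_eq_add, neg_eq_iff_eq_neg] at m2
    rw [m2]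
    module
  rw [m3, m4]
  module

end Aux

end MW

open MW in
theorem stmt10 (l : ℕ) (hl : 1 < l) [NeZero l]
    (hi : Rel l ≤ (Rel l).comap (iV l)) :
    (∀ φ : Module.Dual ℂ (M l), φ.comp (Submodule.mapQ (Rel l) (Rel l) (iV l) hi) = -φ →
      (PD l φ ∈ S l ∧ Submodule.mapQ (Rel l) (Rel l) (iV l) hi (PD l φ) = PD l φ) ∧
      (PD l φ = 0 ↔
        ∀ m ∈ S l, Submodule.mapQ (Rel l) (Rel l) (iV l) hi m = -m → φ m = 0)) ∧
    (∀ m ∈ S l, Submodule.mapQ (Rel l) (Rel l) (iV l) hi m = m →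
      ∃ φ : Module.Dual ℂ (M l),
        φ.comp (Submodule.mapQ (Rel l) (Rel l) (iV l) hi) = -φ ∧ PD l φ = m) := by
  set I := Submodule.mapQ (Rel l) (Rel l) (iV l) hi with hI
  have hII : ∀ m, I (I m) = m := by
    intro m
    obtain ⟨w, rfl⟩ := Submodule.mkQ_surjective _ m
    rw [Submodule.mkQ_apply, hI, Submodule.mapQ_apply, Submodule.mapQ_apply, ii]
  have hPI : ∀ φ : Module.Dual ℂ (M l), PD l (φ.comp I) = -I (PD l φ) := PD_i hi
  have hsmul : ∀ (a : ℂ) (φ : Module.Dual ℂ (M l)), PD l (a • φ) = a • PD l φ := by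
    intro a φ
    have h : pull (a • φ) = a • pull φ := rfl
    rw [PD_rep', PD_rep', h, th_smul]
    simp only [map_smul]
    module
  have hsub : ∀ (φ φ' : Module.Dual ℂ (M l)), PD l (φ - φ') = PD l φ - PD l φ' := by
    intro φ φ'
    have h : pull (φ - φ') = pull φ - pull φ' := rfl
    rw [PD_rep', PD_rep', PD_rep', h, th_sub]
    simp only [map_sub]
    module
  have hneg : ∀ φ : Module.Dual ℂ (M l), PD l (-φ) = -PD l φ := by
    intro φ
    simpa using hsmul (-1) φ
  have hSI : ∀ m ∈ S l, I m ∈ S l := by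
    intro m hm
    obtain ⟨φ, rfl⟩ := PD_surj m hm
    have := (S l).neg_mem (PD_mem (φ.comp I))
    rwa [hPI, neg_neg] at this
  refine ⟨fun φ hφ => ⟨⟨PD_mem φ, ?_⟩, ?_, ?_⟩, ?_⟩
  · have := hPI φ
    rw [hφ, hneg, neg_inj] at this
    exact this.symm
  · intro h m hm _
    obtain ⟨φ', rfl⟩ := PD_surj m hm
    rw [PD_antisymm, h, map_zero, neg_zero]
  · intro h
    have hall : ∀ m ∈ S l, φ m = 0 := by
      intro m hm
      have h1 := h (m - I m) ((S l).sub_mem hm (hSI m hm)) (by rw [map_sub, hII, neg_sub])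
      have h2 : φ (I m) = -φ m := LinearMap.congr_fun hφ m
      rw [map_sub, h2] at h1
      linear_combination h1 / 2
    rw [← Module.forall_dual_apply_eq_zero_iff ℂ]
    intro φ'
    rw [PD_antisymm, hall _ (PD_mem φ'), neg_zero]
  · intro m hm him
    obtain ⟨φ, hφ⟩ := PD_surj m hm
    refine ⟨(2 : ℂ)⁻¹ • (φ - φ.comp I), ?_, ?_⟩
    · apply LinearMap.ext
      intro x
      simp only [LinearMap.comp_apply, LinearMap.smul_apply, LinearMap.sub_apply,
        LinearMap.neg_apply, hII, smul_eq_mul]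
      ring
    · rw [hsmul, hsub, hPI, hφ, him]
      module
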